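/- Let α ∈ ℂ with α ≠ 0 and let R ∈ ℂ(z)^{m×m}. Then R is para-Hermitian if and only if there exist a natural number p and constant matrices A ∈ ℂ^{p×p}, B, C ∈ ℂ^{p×m}, D ∈ ℂ^{m×m} such that det(z·A + A^H) ≠ 0 in ℂ(z) and (α + conj(α)·z)·R = (z·D + D^H) + (z·B^H + C^H)·(z·A + A^H)⁻¹·(z·C + B). -/

import Mathlib

open Polynomial Matrix

set_option synthInstance.maxHeartbeats 1000000
set_option maxHeartbeats 1000000

noncomputable section

/-- Coefficientwise complex conjugation on rational functions. -/
def conjRF : RatFunc ℂ →+* RatFunc ℂ :=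
  RatFunc.mapRingHom (Polynomial.mapRingHom (starRingEnd ℂ))
    (by
      intro x hx
      simp only [Submonoid.mem_comap, mem_nonZeroDivisors_iff_ne_zero] at *
      intro h
      exact hx (Polynomial.map_injective _ (starRingEnd ℂ).injective (by simpa using h)))

/-- Substitution of `g` for the variable in `f`. -/
def subst (g f : RatFunc ℂ) : RatFunc ℂ := RatFunc.eval (algebraMap ℂ (RatFunc ℂ)) g f

/-- Constant complex matrices regarded as matrices over `ℂ(z)`. -/
def toRF {n o : Type*} (A : Matrix n o ℂ) : Matrix n o (RatFunc ℂ) :=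
  A.map (algebraMap ℂ (RatFunc ℂ))

/-- The para-conjugate `R^*(1/z)`. -/
def paraConj {n : Type*} (R : Matrix n n (RatFunc ℂ)) : Matrix n n (RatFunc ℂ) :=
  fun i j => subst (RatFunc.X)⁻¹ (conjRF (R j i))

def IsParaHermitian {n : Type*} (R : Matrix n n (RatFunc ℂ)) : Prop := paraConj R = R

def IsParaSkewHermitian {n : Type*} (R : Matrix n n (RatFunc ℂ)) : Prop := paraConj R = -R

/-- The variable `z` of `ℂ(z)`. -/
def zz : RatFunc ℂ := RatFunc.X

/-- Coefficientwise-conjugate transpose of a matrix over `ℂ(z)`. -/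
def conjT {a b : Type*} (R : Matrix a b (RatFunc ℂ)) : Matrix b a (RatFunc ℂ) :=
  fun i j => conjRF (R j i)

/-- Entrywise substitution of `g` into a matrix over `ℂ(z)`. -/
def substMat {a b : Type*} (g : RatFunc ℂ) (R : Matrix a b (RatFunc ℂ)) :
    Matrix a b (RatFunc ℂ) :=
  fun i j => subst g (R i j)

/-! ### The involution `σ f = conj f (1/z)` -/

lemma eval₂_inv_X_ne_zero (p : ℂ[X]) (hp : p ≠ 0) :
    Polynomial.eval₂ (algebraMap ℂ (RatFunc ℂ)) (RatFunc.X)⁻¹ p ≠ 0 := by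
  have h : Transcendental ℂ ((RatFunc.X : RatFunc ℂ)⁻¹) := fun h =>
    RatFunc.transcendental_X (IsAlgebraic.inv_iff.mp h)
  intro h0
  exact h ⟨p, hp, h0⟩

/-- The map `f ↦ conj f (1/z)` as a ring homomorphism. -/
def sig : RatFunc ℂ →+* RatFunc ℂ where
  toFun f := subst (RatFunc.X)⁻¹ (conjRF f)
  map_one' := by simp [subst]
  map_zero' := by simp [subst]
  map_mul' f g := by
    rw [map_mul]
    exact RatFunc.eval_mul _ _ (eval₂_inv_X_ne_zero _ (RatFunc.denom_ne_zero _))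
      (eval₂_inv_X_ne_zero _ (RatFunc.denom_ne_zero _))
  map_add' f g := by
    rw [map_add]
    exact RatFunc.eval_add _ _ (eval₂_inv_X_ne_zero _ (RatFunc.denom_ne_zero _))
      (eval₂_inv_X_ne_zero _ (RatFunc.denom_ne_zero _))

lemma conjRF_algebraMap (p : ℂ[X]) : conjRF (algebraMap ℂ[X] (RatFunc ℂ) p) =
    algebraMap ℂ[X] (RatFunc ℂ) (p.map (starRingEnd ℂ)) := by
  have := RatFunc.map_apply_div (R := ℂ) (K := ℂ)
    (Polynomial.mapRingHom (starRingEnd ℂ)) (by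
      intro x hx
      simp only [Submonoid.mem_comap, mem_nonZeroDivisors_iff_ne_zero] at *
      intro h
      exact hx (Polynomial.map_injective _ (starRingEnd ℂ).injective (by simpa using h))) p 1
  simp only [map_one, div_one] at this
  exact this

lemma sig_C (c : ℂ) : sig (RatFunc.C c) = RatFunc.C (starRingEnd ℂ c) := by
  show subst _ (conjRF _) = _
  rw [← RatFunc.algebraMap_C, conjRF_algebraMap, Polynomial.map_C, RatFunc.algebraMap_C, subst,
    RatFunc.eval_C, RatFunc.algebraMap_eq_C]

lemma sig_zz : sig zz = zz⁻¹ := by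
  show subst _ (conjRF _) = _
  rw [zz, ← RatFunc.algebraMap_X, conjRF_algebraMap, Polynomial.map_X, RatFunc.algebraMap_X, subst,
    RatFunc.eval_X]

lemma zz_ne : zz ≠ 0 := RatFunc.X_ne_zero

/-- Para-conjugate transpose of a rectangular matrix. -/
def tau {a b : Type} (R : Matrix a b (RatFunc ℂ)) : Matrix b a (RatFunc ℂ) := (R.map sig)ᵀ

lemma paraConj_eq_tau {a : Type} (R : Matrix a a (RatFunc ℂ)) : paraConj R = tau R := rfl

lemma tau_mul {a b c : Type} [Fintype b] (R : Matrix a b (RatFunc ℂ)) (S : Matrix b c (RatFunc ℂ)) :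
    tau (R * S) = tau S * tau R := by
  simp [tau, Matrix.map_mul, Matrix.transpose_mul]

lemma tau_add {a b : Type} (R S : Matrix a b (RatFunc ℂ)) :
    tau (R + S) = tau R + tau S := by
  ext i j; simp [tau]

lemma tau_smul {a b : Type} (c : RatFunc ℂ) (R : Matrix a b (RatFunc ℂ)) :
    tau (c • R) = sig c • tau R := by
  ext i j; simp [tau]

lemma tau_one {a : Type} [DecidableEq a] : tau (1 : Matrix a a (RatFunc ℂ)) = 1 := by
  simp [tau]

lemma tau_toRF {a b : Type} (A : Matrix a b ℂ) : tau (toRF A) = toRF Aᴴ := by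
  ext i j; simp [tau, toRF, RatFunc.algebraMap_eq_C, sig_C]

lemma tau_pencil {a b : Type} (A B : Matrix a b ℂ) :
    tau (zz • toRF A + toRF B) = zz⁻¹ • (zz • toRF Bᴴ + toRF Aᴴ) := by
  rw [tau_add, tau_smul, tau_toRF, tau_toRF, sig_zz, smul_add, smul_smul, inv_mul_cancel₀ zz_ne,
    one_smul, add_comm]

lemma toRF_mul {a b c : Type} [Fintype b] (A : Matrix a b ℂ) (B : Matrix b c ℂ) :
    toRF (A * B) = toRF A * toRF B := by
  simp [toRF, Matrix.map_mul]

lemma toRF_zero {a b : Type} : toRF (0 : Matrix a b ℂ) = 0 := by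
  ext i j; simp [toRF]

lemma toRF_neg {a b : Type} (A : Matrix a b ℂ) : toRF (-A) = - toRF A := by
  ext i j; simp [toRF]

lemma toRF_one {a : Type} [DecidableEq a] : toRF (1 : Matrix a a ℂ) = 1 := by
  simp [toRF]

lemma toRF_fromBlocks {a b c d : Type} (A : Matrix a c ℂ) (B : Matrix a d ℂ)
    (C : Matrix b c ℂ) (D : Matrix b d ℂ) :
    toRF (fromBlocks A B C D) = fromBlocks (toRF A) (toRF B) (toRF C) (toRF D) := by
  simp [toRF, Matrix.fromBlocks_map]

lemma toRF_fromRows {a b c : Type} (A : Matrix a c ℂ) (B : Matrix b c ℂ) :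
    toRF (fromRows A B) = fromRows (toRF A) (toRF B) := by
  ext (i | i) j <;> simp [toRF]

lemma toRF_fromCols {a b c : Type} (A : Matrix a b ℂ) (B : Matrix a c ℂ) :
    toRF (fromCols A B) = fromCols (toRF A) (toRF B) := by
  ext i (j | j) <;> simp [toRF]

lemma smul_fromRows' {a b c : Type} (x : RatFunc ℂ) (A : Matrix a c (RatFunc ℂ))
    (B : Matrix b c (RatFunc ℂ)) : x • fromRows A B = fromRows (x • A) (x • B) := by
  ext (i | i) j <;> simp

lemma smul_fromCols' {a b c : Type} (x : RatFunc ℂ) (A : Matrix a b (RatFunc ℂ))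
    (B : Matrix a c (RatFunc ℂ)) : x • fromCols A B = fromCols (x • A) (x • B) := by
  ext i (j | j) <;> simp

lemma add_fromRows' {a b c : Type} (A A' : Matrix a c (RatFunc ℂ))
    (B B' : Matrix b c (RatFunc ℂ)) :
    fromRows A B + fromRows A' B' = fromRows (A + A') (B + B') := by
  ext (i | i) j <;> simp

lemma add_fromCols' {a b c : Type} (A A' : Matrix a b (RatFunc ℂ))
    (B B' : Matrix a c (RatFunc ℂ)) :
    fromCols A B + fromCols A' B' = fromCols (A + A') (B + B') := by
  ext i (j | j) <;> simp

/-! ### Linear representations of scalar rational functions -/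

/-- `f` has a linear representation `f = u (zY + X)⁻¹ v`. -/
def LinRep (f : RatFunc ℂ) : Prop :=
  ∃ (ι : Type) (_ : Fintype ι) (_ : DecidableEq ι) (Y X : Matrix ι ι ℂ)
    (L : Matrix ι ι (RatFunc ℂ)) (u : Matrix Unit ι ℂ) (v : Matrix ι Unit ℂ),
    L * (zz • toRF Y + toRF X) = 1 ∧ toRF u * L * toRF v = f • (1 : Matrix Unit Unit (RatFunc ℂ))

lemma rep_C (c : ℂ) : LinRep (RatFunc.C c) := by
  refine ⟨Unit, inferInstance, inferInstance, 0, 1, 1, 1, fun _ _ => c, ?_, ?_⟩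
  · simp [toRF_zero, toRF_one]
  · rw [toRF_one, one_mul, one_mul]
    ext i j
    simp [toRF, RatFunc.algebraMap_eq_C, Matrix.map_apply]
    rfl

lemma rep_zz : LinRep zz := by
  refine ⟨Unit ⊕ Unit, inferInstance, inferInstance, fromBlocks 0 (-1) 0 0, 1,
    fromBlocks 1 (zz • 1) 0 1, fromCols 1 0, fromRows 0 1, ?_, ?_⟩
  · rw [toRF_fromBlocks, toRF_one, toRF_neg, toRF_zero, toRF_one, fromBlocks_smul,
      ← fromBlocks_one, fromBlocks_add, fromBlocks_multiply]
    congr 1 <;> simp [toRF_zero]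
  · rw [toRF_fromCols, toRF_fromRows, toRF_one, toRF_zero, fromCols_mul_fromBlocks,
      fromCols_mul_fromRows]
    simp

lemma rep_add {f g : RatFunc ℂ} (hf : LinRep f) (hg : LinRep g) : LinRep (f + g) := by
  obtain ⟨ι, _, _, Y, X, L, u, v, h1, h2⟩ := hf
  obtain ⟨κ, _, _, Y', X', L', u', v', h1', h2'⟩ := hg
  refine ⟨ι ⊕ κ, inferInstance, inferInstance, fromBlocks Y 0 0 Y', fromBlocks X 0 0 X',
    fromBlocks L 0 0 L', fromCols u u', fromRows v v', ?_, ?_⟩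
  · rw [toRF_fromBlocks, toRF_fromBlocks, fromBlocks_smul, fromBlocks_add, fromBlocks_multiply,
      ← fromBlocks_one]
    congr 1 <;> simp [toRF_zero, h1, h1']
  · rw [toRF_fromCols, toRF_fromRows, fromCols_mul_fromBlocks, fromCols_mul_fromRows]
    simp [h2, h2', add_smul]

lemma rep_mul {f g : RatFunc ℂ} (hf : LinRep f) (hg : LinRep g) : LinRep (f * g) := by
  obtain ⟨ι, _, _, Y, X, L, u, v, h1, h2⟩ := hf
  obtain ⟨κ, _, _, Y', X', L', u', v', h1', h2'⟩ := hg
  refine ⟨ι ⊕ κ, inferInstance, inferInstance, fromBlocks Y 0 0 Y', fromBlocks X (-(v * u')) 0 X',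
    fromBlocks L (L * toRF v * (toRF u' * L')) 0 L', fromCols u 0, fromRows 0 v', ?_, ?_⟩
  · rw [toRF_fromBlocks, toRF_fromBlocks, fromBlocks_smul, fromBlocks_add, fromBlocks_multiply,
      ← fromBlocks_one]
    congr 1
    · simp [toRF_zero, h1]
    · rw [Matrix.mul_assoc (L * toRF v), Matrix.mul_assoc (toRF u'), h1']
      simp [toRF_zero, toRF_neg, toRF_mul, Matrix.mul_assoc]
    · simp [toRF_zero]
    · simp [toRF_zero, h1']
  · rw [toRF_fromCols, toRF_fromRows, fromCols_mul_fromBlocks, fromCols_mul_fromRows]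
    have : toRF u * (L * toRF v * (toRF u' * L')) * toRF v'
        = (toRF u * L * toRF v) * (toRF u' * L' * toRF v') := by
      simp only [Matrix.mul_assoc]
    simp only [toRF_zero, Matrix.mul_zero, Matrix.zero_mul, add_zero, zero_add, this, h2, h2']
    rw [Matrix.smul_mul, Matrix.one_mul, smul_smul]

lemma rep_inv {f : RatFunc ℂ} (hf : LinRep f) : LinRep f⁻¹ := by
  by_cases h0 : f = 0
  · subst h0; simpa using rep_C 0
  obtain ⟨ι, _, _, Y, X, L, u, v, h1, h2⟩ := hf
  refine ⟨ι ⊕ Unit, inferInstance, inferInstance, fromBlocks Y 0 0 0, fromBlocks X v u 0,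
    fromBlocks (L - f⁻¹ • (L * toRF v * (toRF u * L))) (f⁻¹ • (L * toRF v))
      (f⁻¹ • (toRF u * L)) (-f⁻¹ • 1), fromCols 0 (-1), fromRows 0 1, ?_, ?_⟩
  · rw [toRF_fromBlocks, toRF_fromBlocks, fromBlocks_smul, fromBlocks_add, fromBlocks_multiply,
      ← fromBlocks_one]
    simp only [toRF_zero, smul_zero, zero_add, add_zero, Matrix.mul_zero]
    congr 1
    · rw [Matrix.sub_mul, h1, Matrix.smul_mul, Matrix.mul_assoc (L * toRF v),
        Matrix.mul_assoc (toRF u), h1, Matrix.mul_one, Matrix.smul_mul]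
      simp
    · rw [Matrix.sub_mul, Matrix.smul_mul, Matrix.mul_assoc (L * toRF v), h2]
      simp [smul_smul, h0]
    · rw [Matrix.smul_mul, Matrix.mul_assoc (toRF u), h1]
      simp
    · rw [Matrix.smul_mul, h2, smul_smul, inv_mul_cancel₀ h0, one_smul]
  · rw [toRF_fromCols, toRF_fromRows, toRF_neg, toRF_one, toRF_zero, toRF_zero,
      fromCols_mul_fromBlocks, fromCols_mul_fromRows]
    simp

lemma rep_all (f : RatFunc ℂ) : LinRep f := by
  have hp : ∀ p : ℂ[X], LinRep (algebraMap ℂ[X] (RatFunc ℂ) p) := by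
    intro p
    induction p using Polynomial.induction_on' with
    | add p q hp hq => rw [map_add]; exact rep_add hp hq
    | monomial n a =>
      rw [← Polynomial.C_mul_X_pow_eq_monomial, map_mul, map_pow, RatFunc.algebraMap_C,
        RatFunc.algebraMap_X]
      refine rep_mul (rep_C a) ?_
      induction n with
      | zero => simpa using rep_C 1
      | succ n ih => rw [pow_succ]; exact rep_mul ih rep_zz
  induction f using RatFunc.induction_on with
  | f p q hq => rw [div_eq_mul_inv]; exact rep_mul (hp p) (rep_inv (hp q))

/-! ### Structured realizations -/

/-- `S` has a structured realization. -/
def Realz {m : ℕ} (S : Matrix (Fin m) (Fin m) (RatFunc ℂ)) : Prop :=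
  ∃ (ι : Type) (_ : Fintype ι) (_ : DecidableEq ι) (A : Matrix ι ι ℂ)
    (B C : Matrix ι (Fin m) ℂ) (L : Matrix ι ι (RatFunc ℂ)),
    L * (zz • toRF A + toRF Aᴴ) = 1 ∧
    S = (zz • toRF Bᴴ + toRF Cᴴ) * L * (zz • toRF C + toRF B)

lemma realz_zero {m : ℕ} : Realz (0 : Matrix (Fin m) (Fin m) (RatFunc ℂ)) := by
  refine ⟨Unit, inferInstance, inferInstance, 1, 0, 0, (zz + 1)⁻¹ • 1, ?_, ?_⟩
  · have h : zz + 1 ≠ 0 := by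
      intro h
      have h2 : algebraMap ℂ[X] (RatFunc ℂ) (Polynomial.X + Polynomial.C 1) = 0 := by
        rw [map_add, RatFunc.algebraMap_X, RatFunc.algebraMap_C, map_one]; exact h
      exact Polynomial.X_add_C_ne_zero (1 : ℂ) ((map_eq_zero_iff _ (RatFunc.algebraMap_injective ℂ)).mp h2)
    rw [conjTranspose_one, toRF_one]
    have : zz • (1 : Matrix Unit Unit (RatFunc ℂ)) + 1 = (zz + 1) • 1 := by
      rw [add_smul, one_smul]
    rw [this, Matrix.smul_mul, Matrix.one_mul, smul_smul, inv_mul_cancel₀ h, one_smul]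
  · simp [toRF_zero]

lemma realz_add {m : ℕ} {S T : Matrix (Fin m) (Fin m) (RatFunc ℂ)} (hS : Realz S) (hT : Realz T) :
    Realz (S + T) := by
  obtain ⟨ι, _, _, A, B, C, L, h1, h2⟩ := hS
  obtain ⟨κ, _, _, A', B', C', L', h1', h2'⟩ := hT
  refine ⟨ι ⊕ κ, inferInstance, inferInstance, fromBlocks A 0 0 A', fromRows B B', fromRows C C',
    fromBlocks L 0 0 L', ?_, ?_⟩
  · rw [fromBlocks_conjTranspose, toRF_fromBlocks, toRF_fromBlocks, fromBlocks_smul,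
      fromBlocks_add, fromBlocks_multiply, ← fromBlocks_one]
    congr 1 <;> simp [toRF_zero, h1, h1']
  · rw [conjTranspose_fromRows_eq_fromCols_conjTranspose,
      conjTranspose_fromRows_eq_fromCols_conjTranspose, toRF_fromCols, toRF_fromCols,
      toRF_fromRows, toRF_fromRows, smul_fromRows', smul_fromCols', add_fromRows', add_fromCols',
      fromCols_mul_fromBlocks, fromCols_mul_fromRows]
    simp [h2, h2']

lemma realz_base {m : ℕ} {ι : Type} [Fintype ι] [DecidableEq ι] (Y X : Matrix ι ι ℂ)
    (L : Matrix ι ι (RatFunc ℂ)) (P : Matrix (Fin m) ι ℂ) (Q : Matrix ι (Fin m) ℂ)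
    (h : L * (zz • toRF Y + toRF X) = 1) :
    Realz (toRF P * L * toRF Q + zz • tau (toRF P * L * toRF Q)) := by
  have h' : (zz • toRF Y + toRF X) * L = 1 := mul_eq_one_comm.mp h
  have hN : zz⁻¹ • tau L * (zz • toRF Xᴴ + toRF Yᴴ) = 1 := by
    have := congrArg tau h'
    rw [tau_mul, tau_pencil, tau_one, Matrix.mul_smul, ← Matrix.smul_mul] at this
    exact this
  refine ⟨ι ⊕ ι, inferInstance, inferInstance, fromBlocks 0 Xᴴ Y 0, fromRows 0 Q,
    fromRows Pᴴ 0, fromBlocks 0 L (zz⁻¹ • tau L) 0, ?_, ?_⟩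
  · rw [fromBlocks_conjTranspose, toRF_fromBlocks, toRF_fromBlocks, fromBlocks_smul,
      fromBlocks_add, fromBlocks_multiply, ← fromBlocks_one, conjTranspose_conjTranspose]
    simp only [conjTranspose_zero, toRF_zero, smul_zero, add_zero, Matrix.mul_zero,
      Matrix.zero_mul, zero_add]
    rw [h, hN]
  · rw [conjTranspose_fromRows_eq_fromCols_conjTranspose,
      conjTranspose_fromRows_eq_fromCols_conjTranspose, toRF_fromCols, toRF_fromCols,
      toRF_fromRows, toRF_fromRows, smul_fromRows', smul_fromCols', add_fromRows', add_fromCols',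
      fromCols_mul_fromBlocks, fromCols_mul_fromRows, conjTranspose_conjTranspose]
    simp only [conjTranspose_zero, toRF_zero, smul_zero, add_zero, Matrix.mul_zero,
      Matrix.zero_mul, zero_add]
    rw [tau_mul, tau_mul, tau_toRF, tau_toRF, add_comm]
    simp only [Matrix.smul_mul, Matrix.mul_smul, smul_smul, mul_inv_cancel₀ zz_ne,
      inv_mul_cancel₀ zz_ne, one_smul, Matrix.mul_assoc]

lemma realz_single {m : ℕ} (i j : Fin m) (f : RatFunc ℂ) :
    Realz (Matrix.single i j f + zz • tau (Matrix.single i j f)) := by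
  obtain ⟨ι, _, _, Y, X, L, u, v, h1, h2⟩ := rep_all f
  have key : Matrix.single i j f = toRF (Matrix.single i () (1 : ℂ) * u) * L *
      toRF (v * Matrix.single () j (1 : ℂ)) := by
    have e : toRF (Matrix.single i () (1 : ℂ) * u) * L * toRF (v * Matrix.single () j (1 : ℂ))
      = toRF (Matrix.single i () (1 : ℂ)) * (toRF u * L * toRF v) *
        toRF (Matrix.single () j (1 : ℂ)) := by
      simp only [toRF_mul, Matrix.mul_assoc]
    rw [e, h2]
    simp [toRF, Matrix.map_single]
  rw [key]
  exact realz_base Y X L _ _ h1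

lemma realz_all {m : ℕ} (T : Matrix (Fin m) (Fin m) (RatFunc ℂ)) :
    Realz (T + zz • tau T) := by
  induction T using Matrix.induction_on' with
  | h_zero =>
    have : tau (0 : Matrix (Fin m) (Fin m) (RatFunc ℂ)) = 0 := by ext i j; simp [tau]
    rw [this, smul_zero, add_zero]; exact realz_zero
  | h_add p q hp hq =>
    have : p + q + zz • tau (p + q) = (p + zz • tau p) + (q + zz • tau q) := by
      rw [tau_add, smul_add]; abel
    rw [this]; exact realz_add hp hq
  | h_std_basis i j x => exact realz_single i j x

lemma weight_ne {α : ℂ} (hα : α ≠ 0) : RatFunc.C α + RatFunc.C (starRingEnd ℂ α) * zz ≠ 0 := by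
  intro h
  have h2 : algebraMap ℂ[X] (RatFunc ℂ)
      (Polynomial.C α + Polynomial.C (starRingEnd ℂ α) * Polynomial.X) = 0 := by
    rw [map_add, map_mul, RatFunc.algebraMap_X, RatFunc.algebraMap_C, RatFunc.algebraMap_C]
    exact h
  have h3 := (map_eq_zero_iff _ (RatFunc.algebraMap_injective ℂ)).mp h2
  have h4 := congrArg (fun p => Polynomial.coeff p 0) h3
  simp at h4
  exact hα h4

lemma sig_weight (α : ℂ) : sig (RatFunc.C α + RatFunc.C (starRingEnd ℂ α) * zz) =
    zz⁻¹ * (RatFunc.C α + RatFunc.C (starRingEnd ℂ α) * zz) := by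
  have := zz_ne
  rw [map_add, map_mul, sig_C, sig_C, sig_zz, Complex.conj_conj]
  field_simp
  ring

/-- parametrization of para-Hermitian rational matrices. -/
theorem paraHermitian_parametrization (m : ℕ) (α : ℂ) (hα : α ≠ 0)
    (R : Matrix (Fin m) (Fin m) (RatFunc ℂ)) :
    IsParaHermitian R ↔
      ∃ (p : ℕ) (A : Matrix (Fin p) (Fin p) ℂ) (B C : Matrix (Fin p) (Fin m) ℂ)
        (D : Matrix (Fin m) (Fin m) ℂ),
        (zz • toRF A + toRF Aᴴ).det ≠ 0 ∧
        (RatFunc.C α + RatFunc.C (starRingEnd ℂ α) * zz) • R =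
          (zz • toRF D + toRF Dᴴ) +
            (zz • toRF Bᴴ + toRF Cᴴ) * (zz • toRF A + toRF Aᴴ)⁻¹ * (zz • toRF C + toRF B) := by
  have hw := weight_ne hα
  have hz := zz_ne
  set w := RatFunc.C α + RatFunc.C (starRingEnd ℂ α) * zz with hwdef
  have hsw : sig w = zz⁻¹ * w := sig_weight α
  constructor
  · intro hR
    have hR' : tau R = R := hR
    have h2 : sig (2⁻¹ : RatFunc ℂ) = 2⁻¹ := by rw [map_inv₀, map_ofNat]
    obtain ⟨ι, _, _, A, B, C, L, h1, hS⟩ := realz_all ((2⁻¹ * w) • R)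
    have hS' : ((2⁻¹ * w) • R) + zz • tau ((2⁻¹ * w) • R) = w • R := by
      rw [tau_smul, hR', map_mul, h2, hsw, smul_smul, ← add_smul]
      congr 1
      field_simp
      norm_num
    rw [hS'] at hS
    let e := (Fintype.equivFin ι).symm
    have hinv : L.submatrix e e * (zz • toRF (A.submatrix e e) + toRF (A.submatrix e e)ᴴ) = 1 := by
      have : zz • toRF (A.submatrix e e) + toRF (A.submatrix e e)ᴴ =
        (zz • toRF A + toRF Aᴴ).submatrix e e := rfl
      rw [this, Matrix.submatrix_mul_equiv, h1, Matrix.submatrix_one_equiv]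
    refine ⟨Fintype.card ι, A.submatrix e e, B.submatrix e id, C.submatrix e id, 0, ?_, ?_⟩
    · exact (Matrix.isUnit_det_of_left_inverse hinv).ne_zero
    · rw [Matrix.inv_eq_left_inv hinv, hS]
      have e1 : zz • toRF (B.submatrix e id)ᴴ + toRF (C.submatrix e id)ᴴ =
        (zz • toRF Bᴴ + toRF Cᴴ).submatrix id e := rfl
      have e2 : zz • toRF (C.submatrix e id) + toRF (B.submatrix e id) =
        (zz • toRF C + toRF B).submatrix e id := rfl
      rw [e1, e2, Matrix.submatrix_mul_equiv, Matrix.submatrix_mul_equiv]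
      simp [toRF_zero]
  · rintro ⟨p, A, B, C, D, hdet, hS⟩
    show tau R = R
    set M := zz • toRF A + toRF Aᴴ with hM
    have hMt : tau M = zz⁻¹ • M := by
      rw [hM, tau_pencil, conjTranspose_conjTranspose]
    have hMi : tau M⁻¹ = zz • M⁻¹ := by
      have hu : IsUnit M.det := isUnit_iff_ne_zero.mpr hdet
      have h1 : tau M * tau M⁻¹ = 1 := by
        rw [← tau_mul, Matrix.nonsing_inv_mul _ hu, tau_one]
      rw [hMt] at h1
      calc tau M⁻¹ = (zz • M⁻¹) * ((zz⁻¹ • M) * tau M⁻¹) := by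
            rw [← Matrix.mul_assoc, Matrix.smul_mul, Matrix.mul_smul, smul_smul,
              mul_inv_cancel₀ hz, one_smul, Matrix.nonsing_inv_mul _ hu, Matrix.one_mul]
        _ = zz • M⁻¹ := by rw [h1, Matrix.mul_one]
    have ht := congrArg tau hS
    rw [tau_smul, hsw, tau_add, tau_mul, tau_mul, tau_pencil, tau_pencil, tau_pencil, hMi] at ht
    simp only [conjTranspose_conjTranspose] at ht
    have hfin : (zz⁻¹ * w) • tau R = (zz⁻¹ * w) • R := by
      rw [ht, mul_smul, hS]
      generalize zz • toRF D + toRF Dᴴ = d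
      generalize zz • toRF Bᴴ + toRF Cᴴ = b
      generalize zz • toRF C + toRF B = c
      simp only [smul_add, Matrix.smul_mul, Matrix.mul_smul, smul_smul, mul_inv_cancel₀ hz,
        inv_mul_cancel₀ hz, one_smul, mul_one, one_mul, Matrix.mul_assoc]
    exact smul_right_injective _ (mul_ne_zero (inv_ne_zero hz) hw) hfin
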